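/- Let $\lambda, \mu > 0$, and let $j, k$ be positive integers. Define $M = \frac{\lambda^{k+j} z_1^{k-1} z_2^{j-1}}{\Gamma(k)\Gamma(j)}$. Then $\int_{\mathbb{R}_+^8} \mathbf{1}\{z_4 > x + z_3\}\mathbf{1}\{z_5 > x\}\mathbf{1}\{z_7 > y\}\mathbf{1}\{z_8 + z_9 + z_1 - z_6 > y\}\mathbf{1}\{z_1 + z_8 < z_6\}\,\mu^6 e^{-\mu(z_4+z_5+z_6+z_7+z_8+z_9)} M e^{-\lambda(z_1+z_3)}\,dz = \frac{1}{4}e^{-2\mu(x+y)}\left(\frac{\lambda}{\mu+\lambda}\right)^{j+k}$ for all $x, y \geq 0$, where the integration is over $z_1, z_3, z_4, z_5, z_6, z_7, z_8, z_9$. -/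

import Mathlib

open MeasureTheory Real

/-- The density of the Gamma distribution with integer shape `n` and rate `lam`. -/
noncomputable def erlangDensity (lam : ℝ) (n : ℕ) (z : ℝ) : ℝ :=
  lam ^ n * z ^ (n - 1) / Real.Gamma n * Real.exp (-(lam * z))

lemma integral_Ioi_ite_exp {c a : ℝ} (hc : 0 < c) (ha : 0 ≤ a) :
    ∫ z in Set.Ioi (0:ℝ), (if a < z then c * Real.exp (-(c * z)) else 0) =
      Real.exp (-(c * a)) := by
  have h1 : (fun z : ℝ => if a < z then c * Real.exp (-(c * z)) else 0) =
      (Set.Ioi a).indicator (fun z => c * Real.exp (-c * z)) := by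
    ext z
    simp [Set.indicator_apply]
  rw [h1, setIntegral_indicator measurableSet_Ioi, Set.Ioi_inter_Ioi, sup_eq_right.2 ha,
    integral_const_mul, integral_exp_mul_Ioi (by linarith)]
  field_simp

lemma integral_Ioi_ite_exp_mul {c a : ℝ} (hc : 0 < c) (ha : 0 ≤ a) (d : ℝ) :
    ∫ z in Set.Ioi (0:ℝ), (if a < z then c * Real.exp (-(c * z)) * d else 0) =
      Real.exp (-(c * a)) * d := by
  rw [← integral_Ioi_ite_exp hc ha, ← integral_mul_const]
  simp only [ite_mul, zero_mul]

lemma integrableOn_const_mul_exp {c : ℝ} (hc : 0 < c) :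
    IntegrableOn (fun z => c * Real.exp (-(c * z))) (Set.Ioi 0) := by
  have := (exp_neg_integrableOn_Ioi 0 hc).const_mul c
  simpa only [neg_mul, IntegrableOn] using this

lemma integrableOn_erlangDensity {lam : ℝ} (hlam : 0 < lam) {n : ℕ} (hn : 1 ≤ n) :
    IntegrableOn (erlangDensity lam n) (Set.Ioi 0) := by
  obtain ⟨n, rfl⟩ := Nat.exists_eq_add_of_le' hn
  have h := integrableOn_rpow_mul_exp_neg_mul_rpow (s := n) (p := 1) (b := lam)
    (by have : (0:ℝ) ≤ n := n.cast_nonneg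
        linarith) one_pos hlam
  have h2 := h.const_mul (lam ^ (n + 1) / Real.Gamma (n + 1 : ℕ))
  refine h2.congr (ae_of_all _ fun z => ?_)
  simp [erlangDensity]
  ring

lemma integral_erlangDensity_mul_exp {lam mu : ℝ} (hlam : 0 < lam) (hmu : 0 < mu)
    {n : ℕ} (hn : 1 ≤ n) :
    ∫ z in Set.Ioi (0:ℝ), erlangDensity lam n z * Real.exp (-(mu * z)) =
      (lam / (mu + lam)) ^ n := by
  have hn' : (0:ℝ) < n := by exact_mod_cast hn
  have h := Real.integral_rpow_mul_exp_neg_mul_Ioi hn' (add_pos hmu hlam)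
  have h1 : ∀ z ∈ Set.Ioi (0:ℝ), erlangDensity lam n z * Real.exp (-(mu * z)) =
      (lam ^ n / Real.Gamma n) * (z ^ ((n:ℝ) - 1) * Real.exp (-((mu + lam) * z))) := by
    intro z _
    have e : Real.exp (-((mu + lam) * z)) = Real.exp (-(lam * z)) * Real.exp (-(mu * z)) := by
      rw [← Real.exp_add]
      ring_nf
    have e2 : z ^ ((n:ℝ) - 1) = z ^ (n - 1) := by
      rw [← Real.rpow_natCast, Nat.cast_sub hn, Nat.cast_one]
    rw [e, e2, erlangDensity]
    ring
  rw [setIntegral_congr_fun measurableSet_Ioi h1, integral_const_mul, h, Real.rpow_natCast]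
  have := (Real.Gamma_pos_of_pos hn').ne'
  rw [div_pow, div_pow, one_pow]
  field_simp

lemma integral_integral_ite_exp_erlangDensity {lam mu : ℝ} (hlam : 0 < lam) (hmu : 0 < mu)
    {n : ℕ} (hn : 1 ≤ n) {x : ℝ} (hx : 0 ≤ x) :
    ∫ s in Set.Ioi (0:ℝ), ∫ z in Set.Ioi (0:ℝ),
      (if x + z < s then mu * Real.exp (-(mu * s)) * erlangDensity lam n z else 0) =
      Real.exp (-(mu * x)) * (lam / (mu + lam)) ^ n := by
  have hS : MeasurableSet {p : ℝ × ℝ | x + p.2 < p.1} :=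
    measurableSet_lt (by fun_prop) (by fun_prop)
  have hint := ((integrableOn_const_mul_exp hmu).mul_prod
    (integrableOn_erlangDensity hlam hn)).indicator hS
  rw [integral_integral_swap (hint.congr (ae_of_all _ fun p => by
    simp [Set.indicator_apply, Function.uncurry_def]))]
  have h1 : ∀ z ∈ Set.Ioi (0:ℝ), ∫ s in Set.Ioi (0:ℝ),
      (if x + z < s then mu * Real.exp (-(mu * s)) * erlangDensity lam n z else 0) =
      Real.exp (-(mu * x)) * (erlangDensity lam n z * Real.exp (-(mu * z))) := by
    intro z hz
    have hz' : 0 < z := hz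
    rw [integral_Ioi_ite_exp_mul hmu (by linarith), mul_add, neg_add, Real.exp_add]
    ring
  rw [setIntegral_congr_fun measurableSet_Ioi h1, integral_const_mul,
    integral_erlangDensity_mul_exp hlam hmu hn]

lemma integral_overlap {lam mu : ℝ} (hlam : 0 < lam) (hmu : 0 < mu)
    {n : ℕ} (hn : 1 ≤ n) {y : ℝ} (hy : 0 ≤ y) :
    ∫ u in Set.Ioi (0:ℝ), ∫ t in Set.Ioi (0:ℝ), ∫ s in Set.Ioi (0:ℝ), ∫ z in Set.Ioi (0:ℝ),
      (if y < t + u + z - s ∧ z + t < s then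
        mu * Real.exp (-(mu * u)) * (mu * Real.exp (-(mu * t)) *
          (mu * Real.exp (-(mu * s)) * erlangDensity lam n z)) else 0) =
      1 / 4 * Real.exp (-(mu * y)) * (lam / (mu + lam)) ^ n := by
  set ν := (volume : Measure ℝ).restrict (Set.Ioi 0) with hν
  set e : ℝ → ℝ := fun z => mu * Real.exp (-(mu * z)) with he
  set g := erlangDensity lam n
  have ie : Integrable e ν := integrableOn_const_mul_exp hmu
  have ig : Integrable g ν := integrableOn_erlangDensity hlam hn
  have hpos : ∀ᵐ z ∂ν, 0 < z := ae_restrict_mem measurableSet_Ioi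
  set S : Set (ℝ × ℝ × ℝ × ℝ) :=
    {p | y < p.2.1 + p.1 + p.2.2.2 - p.2.2.1 ∧ p.2.2.2 + p.2.1 < p.2.2.1} with hSdef
  have hS : MeasurableSet S :=
    (measurableSet_lt (f := fun _ => y)
      (g := fun p : ℝ × ℝ × ℝ × ℝ => p.2.1 + p.1 + p.2.2.2 - p.2.2.1)
      (by fun_prop) (by fun_prop)).inter
      (measurableSet_lt (f := fun p : ℝ × ℝ × ℝ × ℝ => p.2.2.2 + p.2.1) (g := fun p => p.2.2.1)
        (by fun_prop) (by fun_prop))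
  set F : ℝ → ℝ × ℝ × ℝ → ℝ := fun u p =>
    if y < p.1 + u + p.2.2 - p.2.1 ∧ p.2.2 + p.1 < p.2.1 then
      e u * (e p.1 * (e p.2.1 * g p.2.2)) else 0 with hF
  have hint : Integrable (Function.uncurry F) (ν.prod (ν.prod (ν.prod ν))) := by
    refine ((ie.mul_prod (ie.mul_prod (ie.mul_prod ig))).indicator hS).congr
      (ae_of_all _ fun p => ?_)
    simp [Set.indicator_apply, Function.uncurry_def, hF, hSdef]
  have hfiber : ∀ᵐ u ∂ν, ∫ t, ∫ s, ∫ z, F u (t, s, z) ∂ν ∂ν ∂ν =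
      ∫ p, F u p ∂ν.prod (ν.prod ν) := by
    filter_upwards [hint.prod_right_ae] with u hu
    change Integrable (F u) _ at hu
    rw [integral_prod _ hu]
    refine integral_congr_ae ?_
    filter_upwards [hu.prod_right_ae] with t ht
    rw [integral_prod _ ht]
  have hmid : Integrable (fun p => ∫ u, F u p ∂ν) (ν.prod (ν.prod ν)) := hint.integral_prod_right
  set G : ℝ → ℝ → ℝ → ℝ := fun t s z => if z + t < s then
    2 * mu * Real.exp (-(2 * mu * s)) *
      (1 / 2 * Real.exp (-(mu * y)) * mu * g z * Real.exp (mu * z)) else 0 with hG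
  have hinner : ∀ᵐ t ∂ν, ∀ᵐ z ∂ν, ∀ s, ∫ u, F u (t, s, z) ∂ν = G t s z := by
    filter_upwards [hpos] with t ht
    filter_upwards [hpos] with z hz
    intro s
    by_cases h : z + t < s
    · have h2 : ∀ u, F u (t, s, z) =
          (if y + s - t - z < u then mu * Real.exp (-(mu * u)) else 0) * (e t * (e s * g z)) := by
        intro u
        simp only [hF, h, and_true, ite_zero_mul]
        refine if_congr ?_ rfl rfl
        constructor <;> intro _ <;> linarith
      simp_rw [h2]
      rw [integral_mul_const, hν, integral_Ioi_ite_exp hmu (by linarith)]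
      simp only [hG, h, if_true, he]
      have e1 : Real.exp (-(mu * (y + s - t - z))) =
        Real.exp (-(mu * y)) * Real.exp (-(mu * s)) * (Real.exp (-(mu * t)))⁻¹
          * Real.exp (mu * z) := by
        rw [← Real.exp_neg, ← Real.exp_add, ← Real.exp_add, ← Real.exp_add]
        ring_nf
      have e2 : Real.exp (-(2 * mu * s)) = Real.exp (-(mu * s)) * Real.exp (-(mu * s)) := by
        rw [← Real.exp_add]
        ring_nf
      rw [e1, e2]
      have := (Real.exp_pos (-(mu * t))).ne'
      field_simp
    · simp [hF, hG, h]
  have hlast : ∀ᵐ t ∂ν, ∫ q, ∫ u, F u (t, q) ∂ν ∂ν.prod ν =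
      2 * mu * Real.exp (-(2 * mu * t)) *
        (1 / 4 * Real.exp (-(mu * y)) * (lam / (mu + lam)) ^ n) := by
    filter_upwards [hmid.prod_right_ae, hinner, hpos] with t hmt hin ht
    rw [integral_prod_symm _ hmt]
    have : ∀ᵐ z ∂ν, ∫ s, ∫ u, F u (t, s, z) ∂ν ∂ν =
        2 * mu * Real.exp (-(2 * mu * t)) * (1 / 4 * Real.exp (-(mu * y))) *
          (g z * Real.exp (-(mu * z))) := by
      filter_upwards [hin, hpos] with z hz hz0
      simp_rw [hz, hG]
      rw [hν, integral_Ioi_ite_exp_mul (by linarith) (by linarith)]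
      have e1 : Real.exp (-(2 * mu * (z + t))) =
          Real.exp (-(mu * z)) * (Real.exp (mu * z))⁻¹ * Real.exp (-(2 * mu * t)) := by
        rw [← Real.exp_neg, ← Real.exp_add, ← Real.exp_add]
        ring_nf
      rw [e1]
      have := (Real.exp_pos (mu * z)).ne'
      field_simp
      ring
    rw [integral_congr_ae this, integral_const_mul, hν,
      integral_erlangDensity_mul_exp hlam hmu hn]
    ring
  have h2 : ∫ t in Set.Ioi (0:ℝ), 2 * mu * Real.exp (-(2 * mu * t)) = 1 := by
    have h := integral_Ioi_ite_exp (c := 2 * mu) (by linarith) le_rfl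
    rw [mul_zero, neg_zero, Real.exp_zero] at h
    rw [← h]
    exact setIntegral_congr_fun measurableSet_Ioi fun t ht => (if_pos ht).symm
  calc _ = ∫ u, ∫ t, ∫ s, ∫ z, F u (t, s, z) ∂ν ∂ν ∂ν ∂ν := rfl
    _ = ∫ p, ∫ u, F u p ∂ν ∂ν.prod (ν.prod ν) := by
      rw [integral_congr_ae hfiber, integral_integral_swap hint]
    _ = _ := by
      rw [integral_prod _ hmid, integral_congr_ae hlast, integral_mul_const, h2, one_mul]

theorem contained_pairs_second_term (lam mu : ℝ) (hlam : 0 < lam) (hmu : 0 < mu)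
    (j k : ℕ) (hj : 1 ≤ j) (hk : 1 ≤ k) (x y : ℝ) (hx : 0 ≤ x) (hy : 0 ≤ y) :
    (∫ z9 in Set.Ioi (0:ℝ), ∫ z8 in Set.Ioi (0:ℝ), ∫ z7 in Set.Ioi (0:ℝ),
      ∫ z6 in Set.Ioi (0:ℝ), ∫ z5 in Set.Ioi (0:ℝ), ∫ z4 in Set.Ioi (0:ℝ),
        ∫ z3 in Set.Ioi (0:ℝ), ∫ z1 in Set.Ioi (0:ℝ),
          (if z4 > x + z3 ∧ z5 > x ∧ z7 > y ∧ z8 + z9 + z1 - z6 > y ∧ z1 + z8 < z6 then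
            mu ^ 6 * Real.exp (-(mu * (z4 + z5 + z6 + z7 + z8 + z9))) *
              (lam ^ (k + j) * z1 ^ (k - 1) * z3 ^ (j - 1) /
                (Real.Gamma k * Real.Gamma j)) *
              Real.exp (-(lam * (z1 + z3)))
          else 0)) =
      1 / 4 * Real.exp (-(2 * mu * (x + y))) * (lam / (mu + lam)) ^ (j + k) := by
  have hsplit : ∀ z9 z8 z7 z6 z5 z4 z3 z1 : ℝ,
      (if z4 > x + z3 ∧ z5 > x ∧ z7 > y ∧ z8 + z9 + z1 - z6 > y ∧ z1 + z8 < z6 then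
        mu ^ 6 * Real.exp (-(mu * (z4 + z5 + z6 + z7 + z8 + z9))) *
          (lam ^ (k + j) * z1 ^ (k - 1) * z3 ^ (j - 1) / (Real.Gamma k * Real.Gamma j)) *
          Real.exp (-(lam * (z1 + z3)))
      else 0) =
      (if y < z7 then mu * Real.exp (-(mu * z7)) else 0) *
      ((if x < z5 then mu * Real.exp (-(mu * z5)) else 0) *
      ((if x + z3 < z4 then mu * Real.exp (-(mu * z4)) * erlangDensity lam j z3 else 0) *
      (if y < z8 + z9 + z1 - z6 ∧ z1 + z8 < z6 then
        mu * Real.exp (-(mu * z9)) * (mu * Real.exp (-(mu * z8)) *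
          (mu * Real.exp (-(mu * z6)) * erlangDensity lam k z1)) else 0))) := by
    intro z9 z8 z7 z6 z5 z4 z3 z1
    have e1 : Real.exp (-(mu * (z4 + z5 + z6 + z7 + z8 + z9))) =
        Real.exp (-(mu * z4)) * Real.exp (-(mu * z5)) * Real.exp (-(mu * z6)) *
          Real.exp (-(mu * z7)) * Real.exp (-(mu * z8)) * Real.exp (-(mu * z9)) := by
      simp only [← Real.exp_add]
      ring_nf
    have e2 : Real.exp (-(lam * (z1 + z3))) =
        Real.exp (-(lam * z1)) * Real.exp (-(lam * z3)) := by
      rw [← Real.exp_add]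
      ring_nf
    rw [e1, e2]
    simp only [erlangDensity, gt_iff_lt]
    split_ifs <;> first | (exfalso; tauto) | ring
  simp_rw [hsplit, integral_const_mul, integral_mul_const, integral_const_mul]
  rw [integral_integral_ite_exp_erlangDensity hlam hmu hj hx, integral_Ioi_ite_exp hmu hx,
    integral_Ioi_ite_exp hmu hy, integral_overlap hlam hmu hk hy]
  have e : Real.exp (-(2 * mu * (x + y))) =
      Real.exp (-(mu * x)) * Real.exp (-(mu * x)) * Real.exp (-(mu * y)) *
        Real.exp (-(mu * y)) := by
    simp only [← Real.exp_add]
    ring_nf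
  rw [e, pow_add]
  ring
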